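/- Let A = D + N ∈ Mₙ(ℍ), where D is a diagonal matrix with real entries and N is strictly upper triangular (N_{ij} = 0 for i ≥ j) and cycle-free. Then W(A) is a convex subset of ℍ (regarded as a 4-dimensional real vector space). -/

import Mathlib

/-- The quaternionic numerical range of a square quaternionic matrix. -/
def qnr {ι : Type*} [Fintype ι] (A : Matrix ι ι (Quaternion ℝ)) : Set (Quaternion ℝ) :=
  {q | ∃ x : ι → Quaternion ℝ, (∑ i, ‖x i‖ ^ 2) = 1 ∧
    q = ∑ i, ∑ j, star (x i) * A i j * x j}

/-- The undirected graph associated with a quaternionic matrix `A`: distinct vertices `i, j`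
are adjacent iff `A i j ≠ 0` or `A j i ≠ 0`. -/
def graphOf {n : ℕ} (A : Matrix (Fin n) (Fin n) (Quaternion ℝ)) : SimpleGraph (Fin n) :=
  SimpleGraph.fromRel (fun i j => A i j ≠ 0)

lemma gauge_exists {V H : Type*} [Fintype V] [LinearOrder V] [Group H] (σ : V → V → H)
    (G : SimpleGraph V) (hG : G.IsAcyclic) :
    ∃ g : V → H, ∀ i j, G.Adj i j → i < j → g j = σ i j * g i := by
  classical
  induction G using WellFoundedLT.induction with
  | ind G ih =>
  by_cases h : ∃ a b, G.Adj a b ∧ a < b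
  · obtain ⟨a, b, hab, hlt⟩ := h
    have hbr := (SimpleGraph.isAcyclic_iff_forall_adj_isBridge.mp hG) hab
    rw [SimpleGraph.isBridge_iff] at hbr
    set G' := G \ SimpleGraph.fromEdgeSet {s(a, b)} with hG'
    have hle : G' ≤ G := sdiff_le
    have hnr : ¬ G'.Reachable a b := hbr
    have hlt' : G' < G := by
      refine lt_of_le_of_ne hle ?_
      intro he
      apply hnr
      rw [he]
      exact hab.reachable
    obtain ⟨g, hg⟩ := ih G' hlt' (hG.anti hle)
    refine ⟨fun v => if G'.Reachable b v then g v * ((g b)⁻¹ * σ a b * g a) else g v, ?_⟩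
    intro i j hij hlt2
    by_cases he : s(i, j) = s(a, b)
    · have : i = a ∧ j = b := by
        rcases Sym2.eq_iff.mp he with h | ⟨h1, h2⟩
        · exact h
        · subst h1 h2
          exact absurd hlt (not_lt.mpr hlt2.le)
      obtain ⟨rfl, rfl⟩ := this
      have h1 : ¬ G'.Reachable j i := fun h => hnr h.symm
      simp only [SimpleGraph.Reachable.refl, if_true, h1, if_false]
      group
    · have hadj : G'.Adj i j := by
        rw [hG', SimpleGraph.sdiff_adj]
        refine ⟨hij, ?_⟩
        rw [SimpleGraph.fromEdgeSet_adj]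
        rintro ⟨h, -⟩
        exact he h
      have hiff : G'.Reachable b i ↔ G'.Reachable b j :=
        ⟨fun h => h.trans hadj.reachable, fun h => h.trans hadj.symm.reachable⟩
      have := hg i j hadj hlt2
      by_cases hb : G'.Reachable b i
      · have hb' := hiff.mp hb
        simp only [hb, hb', if_true, this, mul_assoc]
      · have hb' : ¬ G'.Reachable b j := fun h => hb (hiff.mpr h)
        simp only [hb, hb', if_false, this]
  · exact ⟨fun _ => 1, fun i j h1 h2 => absurd ⟨i, j, h1, h2⟩ h⟩

lemma phase_exists {n : ℕ} (N : Matrix (Fin n) (Fin n) (Quaternion ℝ))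
    (hN : ∀ i j, j ≤ i → N i j = 0) (hacyclic : (graphOf N).IsAcyclic)
    (w : Quaternion ℝ) (hw : ‖w‖ = 1) :
    ∃ u : Fin n → Quaternion ℝ, (∀ i, ‖u i‖ = 1) ∧
      ∀ i j, star (u i) * N i j * u j = ‖N i j‖ • w := by
  classical
  have hν : ∀ i j, ∃ ν : Metric.sphere (0 : Quaternion ℝ) 1,
      N i j = ‖N i j‖ • (ν : Quaternion ℝ) := by
    intro i j
    by_cases h : N i j = 0
    · exact ⟨1, by simp [h]⟩
    · refine ⟨⟨‖N i j‖⁻¹ • N i j, ?_⟩, ?_⟩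
      · simp [norm_smul, h]
      · simp [smul_smul, h]
  choose ν hν using hν
  let W : Metric.sphere (0 : Quaternion ℝ) 1 := ⟨w, by simpa using hw⟩
  obtain ⟨g, hg⟩ := gauge_exists (H := Equiv.Perm (Metric.sphere (0 : Quaternion ℝ) 1))
    (fun i j => Equiv.mulLeft (ν i j)⁻¹ * Equiv.mulRight W) (graphOf N) hacyclic
  refine ⟨fun i => (g i 1 : Metric.sphere (0 : Quaternion ℝ) 1), fun i => by simp, ?_⟩
  intro i j
  by_cases h : N i j = 0
  · simp [h]
  have hij : i < j := by
    by_contra h'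
    exact h (hN i j (not_lt.mp h'))
  have hadj : (graphOf N).Adj i j := by
    rw [graphOf, SimpleGraph.fromRel_adj]
    exact ⟨hij.ne, Or.inl h⟩
  have h1 := hg i j hadj hij
  have h2 : g j 1 = (ν i j)⁻¹ * (g i 1 * W) := by rw [h1]; rfl
  have h3 : (g i 1)⁻¹ * ν i j * g j 1 = W := by rw [h2]; group
  have h4 := congrArg (fun z : Metric.sphere (0 : Quaternion ℝ) 1 => (z : Quaternion ℝ)) h3
  have h5 : star ((g i 1 : Metric.sphere (0 : Quaternion ℝ) 1) : Quaternion ℝ)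
      = (((g i 1)⁻¹ : Metric.sphere (0 : Quaternion ℝ) 1) : Quaternion ℝ) := by
    rw [Metric.unitSphere.coe_inv, Quaternion.inv_def, Quaternion.normSq_eq_norm_mul_self]
    simp
  have h6 : star ((g i 1 : Metric.sphere (0 : Quaternion ℝ) 1) : Quaternion ℝ) * (ν i j) *
      (g j 1 : Metric.sphere (0 : Quaternion ℝ) 1) = w := by
    rw [h5]; exact h4
  calc _ = star ((g i 1 : Metric.sphere (0 : Quaternion ℝ) 1) : Quaternion ℝ) *
      (‖N i j‖ • (ν i j : Quaternion ℝ)) * (g j 1 : Metric.sphere (0 : Quaternion ℝ) 1) := by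
        rw [← hν]
    _ = _ := by rw [mul_smul_comm, smul_mul_assoc, h6]

lemma qform_eq {n : ℕ} (N : Matrix (Fin n) (Fin n) (Quaternion ℝ)) (d : Fin n → ℝ)
    (x : Fin n → Quaternion ℝ) :
    ∑ i, ∑ j, star (x i) * (Matrix.diagonal (fun i => ((d i : ℝ) : Quaternion ℝ)) + N) i j * x j
      = ((∑ i, d i * ‖x i‖ ^ 2 : ℝ) : Quaternion ℝ) + ∑ i, ∑ j, star (x i) * N i j * x j := by
  simp only [Matrix.add_apply, mul_add, add_mul, Finset.sum_add_distrib]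
  congr 1
  rw [show ((∑ i, d i * ‖x i‖ ^ 2 : ℝ) : Quaternion ℝ)
    = ∑ i, ((d i * ‖x i‖ ^ 2 : ℝ) : Quaternion ℝ) from
      map_sum (algebraMap ℝ (Quaternion ℝ)) (fun i => d i * ‖x i‖ ^ 2) Finset.univ]
  refine Finset.sum_congr rfl fun i _ => ?_
  rw [Finset.sum_eq_single i]
  · rw [Matrix.diagonal_apply_eq, ← Quaternion.coe_commutes, mul_assoc, Quaternion.star_mul_self,
      Quaternion.normSq_eq_norm_mul_self, ← pow_two, Quaternion.coe_mul]
  · intro j _ hj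
    simp [Matrix.diagonal_apply_ne' _ hj]
  · simp

/-- The set of quaternions that the numerical range is compared to. -/
lemma mem_qnr_iff {n : ℕ} (N : Matrix (Fin n) (Fin n) (Quaternion ℝ)) (d : Fin n → ℝ)
    (hN : ∀ i j, j ≤ i → N i j = 0) (hacyclic : (graphOf N).IsAcyclic) (q : Quaternion ℝ) :
    q ∈ qnr (Matrix.diagonal (fun i => ((d i : ℝ) : Quaternion ℝ)) + N) ↔
    ∃ p : Fin n → ℝ, (∀ i, 0 ≤ p i) ∧ ∑ i, p i = 1 ∧
      ‖q - ((∑ i, d i * p i : ℝ) : Quaternion ℝ)‖ ≤ ∑ i, ∑ j, √(p i) * √(p j) * ‖N i j‖ := by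
  classical
  constructor
  · rintro ⟨x, hx, rfl⟩
    refine ⟨fun i => ‖x i‖ ^ 2, fun i => by positivity, hx, ?_⟩
    rw [qform_eq, add_sub_cancel_left]
    refine (norm_sum_le _ _).trans (Finset.sum_le_sum fun i _ => ?_)
    refine (norm_sum_le _ _).trans (Finset.sum_le_sum fun j _ => ?_)
    rw [norm_mul, norm_mul, norm_star, Real.sqrt_sq (norm_nonneg _), Real.sqrt_sq (norm_nonneg _)]
    apply le_of_eq; ring
  · rintro ⟨p, hp0, hp1, hp⟩
    -- a boundary point
    obtain ⟨i₀⟩ : Nonempty (Fin n) := by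
      by_contra h
      rw [not_nonempty_iff] at h
      simp at hp1
    let P : ℝ → Fin n → ℝ := fun t i => (1 - t) * p i + t * (if i = i₀ then 1 else 0)
    let f : ℝ → ℝ := fun t => ‖q - ((∑ i, d i * P t i : ℝ) : Quaternion ℝ)‖ -
      ∑ i, ∑ j, √(P t i) * √(P t j) * ‖N i j‖
    have hPc : ∀ i, Continuous fun t => P t i := fun i => by fun_prop
    have hf : Continuous f := by
      refine Continuous.sub (Continuous.norm (continuous_const.sub
        (Quaternion.continuous_coe.comp ?_))) ?_
      · exact continuous_finsetSum _ fun i _ => continuous_const.mul (hPc i)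
      · exact continuous_finsetSum _ fun i _ => continuous_finsetSum _ fun j _ =>
          ((hPc i).sqrt.mul (hPc j).sqrt).mul continuous_const
    have hf0 : f 0 ≤ 0 := by simpa [f, P] using hp
    have hf1 : 0 ≤ f 1 := by
      have : ∑ i, ∑ j, √(P 1 i) * √(P 1 j) * ‖N i j‖ = 0 := by
        refine Finset.sum_eq_zero fun i _ => Finset.sum_eq_zero fun j _ => ?_
        by_cases hi : i = i₀
        · by_cases hj : j = i₀
          · rw [hi, hj, hN i₀ i₀ le_rfl]; simp
          · simp [P, hj]
        · simp [P, hi]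
      simp only [f, this, sub_zero]
      exact norm_nonneg _
    obtain ⟨t, ⟨ht0, ht1⟩, ht⟩ := intermediate_value_Icc zero_le_one hf.continuousOn ⟨hf0, hf1⟩
    have hQ0 : ∀ i, 0 ≤ P t i := by
      intro i
      have := hp0 i
      have h1 : 0 ≤ 1 - t := by linarith
      simp only [P]
      split_ifs <;> positivity
    have hQ1 : ∑ i, P t i = 1 := by
      simp only [P, Finset.sum_add_distrib, ← Finset.mul_sum, hp1]
      simp
    set Q := P t with hQ
    have hQe : ‖q - ((∑ i, d i * Q i : ℝ) : Quaternion ℝ)‖ =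
      ∑ i, ∑ j, √(Q i) * √(Q j) * ‖N i j‖ := sub_eq_zero.mp ht
    set v := q - ((∑ i, d i * Q i : ℝ) : Quaternion ℝ) with hv
    obtain ⟨w, hw, hvw⟩ : ∃ w : Quaternion ℝ, ‖w‖ = 1 ∧ v = ‖v‖ • w := by
      by_cases h : v = 0
      · exact ⟨1, by simp, by simp [h]⟩
      · exact ⟨‖v‖⁻¹ • v, by simp [norm_smul, h], by simp [smul_smul, h]⟩
    obtain ⟨u, hu, huN⟩ := phase_exists N hN hacyclic w hw
    have hn : ∀ i, ‖√(Q i) • u i‖ ^ 2 = Q i := by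
      intro i
      rw [norm_smul, hu, mul_one, Real.norm_eq_abs, sq_abs, Real.sq_sqrt (hQ0 i)]
    refine ⟨fun i => √(Q i) • u i, ?_, ?_⟩
    · simp only [hn, hQ1]
    · rw [qform_eq]
      simp only [hn]
      have : ∑ i, ∑ j, star (√(Q i) • u i) * N i j * (√(Q j) • u j) = v := by
        rw [hvw, hQe, Finset.sum_smul]
        refine Finset.sum_congr rfl fun i _ => ?_
        rw [Finset.sum_smul]
        refine Finset.sum_congr rfl fun j _ => ?_
        rw [mul_smul, ← huN, Quaternion.star_smul, smul_mul_assoc, smul_mul_assoc, mul_smul_comm,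
          smul_smul]
      rw [this, hv]
      abel

lemma sqrt_concave (a b p q r s : ℝ) (ha : 0 ≤ a) (hb : 0 ≤ b) (hp : 0 ≤ p) (hq : 0 ≤ q)
    (hr : 0 ≤ r) (hs : 0 ≤ s) :
    a * (√p * √q) + b * (√r * √s) ≤ √(a * p + b * r) * √(a * q + b * s) := by
  rw [← Real.sqrt_mul (show 0 ≤ a * p + b * r by positivity)]
  apply Real.le_sqrt_of_sq_le
  obtain ⟨p, hp', rfl⟩ : ∃ x, 0 ≤ x ∧ p = x ^ 2 := ⟨√p, by positivity, (Real.sq_sqrt hp).symm⟩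
  obtain ⟨q, hq', rfl⟩ : ∃ x, 0 ≤ x ∧ q = x ^ 2 := ⟨√q, by positivity, (Real.sq_sqrt hq).symm⟩
  obtain ⟨r, hr', rfl⟩ : ∃ x, 0 ≤ x ∧ r = x ^ 2 := ⟨√r, by positivity, (Real.sq_sqrt hr).symm⟩
  obtain ⟨s, hs', rfl⟩ : ∃ x, 0 ≤ x ∧ s = x ^ 2 := ⟨√s, by positivity, (Real.sq_sqrt hs).symm⟩
  rw [Real.sqrt_sq hp', Real.sqrt_sq hq', Real.sqrt_sq hr', Real.sqrt_sq hs']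
  nlinarith [mul_nonneg (mul_nonneg ha hb) (sq_nonneg (p * s - q * r))]

/-- If `A = D + N` with `D` a real diagonal matrix and `N` strictly upper
triangular and cycle-free, then `W(A)` is convex (in `ℍ` as a real vector space). -/
theorem qnr_diag_plus_cycle_free_convex {n : ℕ}
    (N : Matrix (Fin n) (Fin n) (Quaternion ℝ)) (d : Fin n → ℝ)
    (hN : ∀ i j, j ≤ i → N i j = 0)
    (hacyclic : (graphOf N).IsAcyclic) :
    Convex ℝ (qnr (Matrix.diagonal (fun i => ((d i : ℝ) : Quaternion ℝ)) + N)) := by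
  intro x hx y hy a b ha hb hab
  rw [mem_qnr_iff N d hN hacyclic] at hx hy ⊢
  obtain ⟨p, hp0, hp1, hp⟩ := hx
  obtain ⟨r, hr0, hr1, hr⟩ := hy
  refine ⟨fun i => a * p i + b * r i, fun i => ?_, ?_, ?_⟩
  · have := hp0 i
    have := hr0 i
    positivity
  · rw [Finset.sum_add_distrib, ← Finset.mul_sum, ← Finset.mul_sum, hp1, hr1]
    linarith
  · have e : a • x + b • y - ((∑ i, d i * (a * p i + b * r i) : ℝ) : Quaternion ℝ)
      = a • (x - ((∑ i, d i * p i : ℝ) : Quaternion ℝ))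
        + b • (y - ((∑ i, d i * r i : ℝ) : Quaternion ℝ)) := by
      have : ∑ i, d i * (a * p i + b * r i) = a * (∑ i, d i * p i) + b * ∑ i, d i * r i := by
        rw [Finset.mul_sum, Finset.mul_sum, ← Finset.sum_add_distrib]
        exact Finset.sum_congr rfl fun i _ => by ring
      rw [this, Quaternion.coe_add, Quaternion.coe_mul, Quaternion.coe_mul,
        Quaternion.coe_mul_eq_smul, Quaternion.coe_mul_eq_smul, smul_sub, smul_sub]
      abel
    rw [e]
    refine (norm_add_le _ _).trans ?_
    rw [norm_smul, norm_smul, Real.norm_of_nonneg ha, Real.norm_of_nonneg hb]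
    refine (add_le_add (mul_le_mul_of_nonneg_left hp ha)
      (mul_le_mul_of_nonneg_left hr hb)).trans ?_
    simp only [Finset.mul_sum]
    rw [← Finset.sum_add_distrib]
    refine Finset.sum_le_sum fun i _ => ?_
    rw [← Finset.sum_add_distrib]
    refine Finset.sum_le_sum fun j _ => ?_
    have := mul_le_mul_of_nonneg_right (sqrt_concave a b (p i) (p j) (r i) (r j) ha hb (hp0 i)
      (hp0 j) (hr0 i) (hr0 j)) (norm_nonneg (N i j))
    linarith
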